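/- (Theorem 2: Suboptimality bound for MPC with dynamic move blocking, relative form.) Let M = N − N_B ≥ 2, let γ > 0 be a real number with (γ+1)^{M−2} > γ^M, suppose Assumption (γ, M) holds together with the relaxed-increment condition V_M(f(x,μ_M(x))) ≤ V_{M−1}(f(x,μ_M(x))) + (γ^M/(γ+1)^{M−2})·ℓ(x, μ_M(x)) for all x ∈ X. Fix a blocked input sequence ũ : Fin N_B → U and an initial state x with N_B-step prediction x_{N_B} and blocked cost δ(x) < ∞, and assume 0 < V_∞(x) < ∞ and V_∞(x_{N_B}) ≤ V_∞(x). Then, with V_∞^{μ_N^DMB}(x) = δ(x) + V_∞^{μ_M}(x_{N_B}) denoting the infinite-horizon cost of the dynamic-move-blocking closed loop, one has (V_∞^{μ_N^DMB}(x) − V_∞(x)) / V_∞(x) ≤ γ^M / ((γ+1)^{M−2} − γ^M) + δ(x) / V_∞(x). -/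

import Mathlib

open scoped ENNReal

/-- Open-loop trajectory: `traj f x u k` is the state after `k` steps of the
dynamics `f` starting from `x` under the input sequence `u`. -/
noncomputable def traj {X U : Type*} (f : X → U → X) (x : X) (u : ℕ → U) : ℕ → X
  | 0 => x
  | k + 1 => f (traj f x u k) (u k)

/-- Extension of a finite input sequence `u : Fin N → U` to `ℕ → U`
(arbitrary values after time `N`). -/
noncomputable def extSeq {U : Type*} [Nonempty U] {N : ℕ} (u : Fin N → U) : ℕ → U :=
  fun k => if h : k < N then u ⟨k, h⟩ else Classical.arbitrary U

/-- Finite-horizon value function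
`V f ℓ N x = ⨅_{u : Fin N → U} ∑_{k=0}^{N-1} ℓ(x_u(k), u(k))`, with `V 0 ≡ 0`. -/
noncomputable def V {X U : Type*} [Nonempty U] (f : X → U → X) (ℓ : X → U → ℝ≥0∞)
    (N : ℕ) (x : X) : ℝ≥0∞ :=
  ⨅ u : Fin N → U, ∑ k ∈ Finset.range N, ℓ (traj f x (extSeq u) k) (extSeq u k)

/-- Infinite-horizon value function
`Vinf f ℓ x = ⨅_{u : ℕ → U} ∑_{k=0}^{∞} ℓ(x_u(k), u(k))`. -/
noncomputable def Vinf {X U : Type*} (f : X → U → X) (ℓ : X → U → ℝ≥0∞) (x : X) : ℝ≥0∞ :=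
  ⨅ u : ℕ → U, ∑' k : ℕ, ℓ (traj f x u k) (u k)

/-- Closed-loop trajectory under the feedback law `μ`. -/
noncomputable def clTraj {X U : Type*} (f : X → U → X) (μ : X → U) (x : X) : ℕ → X
  | 0 => x
  | k + 1 => f (clTraj f μ x k) (μ (clTraj f μ x k))

/-- Infinite-horizon closed-loop cost of the feedback law `μ`:
`Vcl f ℓ μ x = ∑_{k=0}^{∞} ℓ(x_k, μ(x_k))`. -/
noncomputable def Vcl {X U : Type*} (f : X → U → X) (ℓ : X → U → ℝ≥0∞) (μ : X → U)
    (x : X) : ℝ≥0∞ :=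
  ∑' k : ℕ, ℓ (clTraj f μ x k) (μ (clTraj f μ x k))

/-- Trajectories up to time `n` depend only on the inputs before time `n`. -/
lemma traj_congr {X U : Type*} (f : X → U → X) (x : X) {u v : ℕ → U} {n : ℕ}
    (h : ∀ k < n, u k = v k) : traj f x u n = traj f x v n := by
  induction n with
  | zero => rfl
  | succ n ih =>
    simp only [traj]
    rw [ih fun k hk => h k (by omega), h n (by omega)]

/-- The finite-horizon value function is bounded by the infinite-horizon one. -/
lemma V_le_Vinf {X U : Type*} [Nonempty U] (f : X → U → X) (ℓ : X → U → ℝ≥0∞)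
    (N : ℕ) (x : X) : V f ℓ N x ≤ Vinf f ℓ x := by
  refine le_iInf fun u => ?_
  have hext : ∀ k < N, extSeq (fun i : Fin N => u i) k = u k := fun k hk => by
    simp [extSeq, hk]
  calc V f ℓ N x
      ≤ ∑ k ∈ Finset.range N, ℓ (traj f x (extSeq fun i : Fin N => u i) k)
          (extSeq (fun i : Fin N => u i) k) := iInf_le _ _
    _ = ∑ k ∈ Finset.range N, ℓ (traj f x u k) (u k) := by
        refine Finset.sum_congr rfl fun k hk => ?_
        have hk := Finset.mem_range.mp hk
        rw [hext k hk, traj_congr f x fun j hj => hext j (hj.trans hk)]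
    _ ≤ ∑' k, ℓ (traj f x u k) (u k) := ENNReal.sum_le_tsum _

/-- Relaxed dynamic programming: a function `W` that decreases along the closed loop by at least
`c` times the running cost bounds `c` times the closed-loop cost. -/
lemma mul_Vcl_le_of_decrease {X U : Type*} (f : X → U → X) (ℓ : X → U → ℝ≥0∞) (μ : X → U)
    (W : X → ℝ≥0∞) (c : ℝ≥0∞) (h : ∀ x, c * ℓ x (μ x) + W (f x (μ x)) ≤ W x) (x : X) :
    c * Vcl f ℓ μ x ≤ W x := by
  have hsum : ∀ n, ∑ k ∈ Finset.range n, c * ℓ (clTraj f μ x k) (μ (clTraj f μ x k)) +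
      W (clTraj f μ x n) ≤ W x := by
    intro n
    induction n with
    | zero => simp [clTraj]
    | succ n ih =>
      rw [Finset.sum_range_succ, add_assoc]
      exact (add_le_add_right (h _) _).trans ih
  rw [Vcl, ← ENNReal.tsum_mul_left, ENNReal.tsum_eq_iSup_nat]
  exact iSup_le fun n => le_self_add.trans (hsum n)

/-- Turns the relaxed increment `w' ≤ v + a * l` into the decrease `(1 - a) * l + w' ≤ l + v`. -/
lemma one_sub_mul_add_le {a : ℝ} (ha : 0 ≤ a) (ha1 : a ≤ 1) {l v w : ℝ≥0∞}
    (h : w ≤ v + ENNReal.ofReal a * l) :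
    ENNReal.ofReal (1 - a) * l + w ≤ l + v := by
  calc ENNReal.ofReal (1 - a) * l + w
      ≤ ENNReal.ofReal (1 - a) * l + (v + ENNReal.ofReal a * l) := by gcongr
    _ = (ENNReal.ofReal (1 - a) + ENNReal.ofReal a) * l + v := by ring
    _ = l + v := by
        rw [← ENNReal.ofReal_add (by linarith) ha]
        simp

/-- Theorem 2 (relative form): under the hypotheses of Theorem 1, for a blocked
input sequence `ũ` and an initial state `x` with `δ(x) < ∞`, `0 < V_∞(x) < ∞`
and `V_∞(x_{N_B}) ≤ V_∞(x)`, the infinite-horizon cost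
`V_∞^{μ_N^DMB}(x) = δ(x) + V_∞^{μ_M}(x_{N_B})` of the dynamic-move-blocking
closed loop satisfies
`(V_∞^{μ_N^DMB}(x) - V_∞(x)) / V_∞(x) ≤ γ^M / ((γ+1)^{M-2} - γ^M) + δ(x)/V_∞(x)`. -/
theorem dmb_suboptimality_rel {X U : Type*} [Nonempty X] [Nonempty U]
    (f : X → U → X) (ℓ : X → U → ℝ≥0∞) (N NB : ℕ) (hM : 2 ≤ N - NB)
    (γ : ℝ) (hγ : 0 < γ)
    (hstrict : γ ^ (N - NB) < (γ + 1) ^ (N - NB - 2))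
    (μ : ℕ → X → U)
    (hDP : ∀ k, 2 ≤ k → k ≤ N - NB → ∀ x : X,
      V f ℓ k x = ℓ x (μ k x) + V f ℓ (k - 1) (f x (μ k x)))
    (h2 : ∀ x : X, V f ℓ 2 x ≤ ENNReal.ofReal (γ + 1) * V f ℓ 1 x)
    (hk : ∀ k, 2 ≤ k → k ≤ N - NB → ∀ x : X,
      V f ℓ k x ≤ ENNReal.ofReal (γ + 1) * ℓ x (μ k x))
    (hinc : ∀ x : X,
      V f ℓ (N - NB) (f x (μ (N - NB) x)) ≤
        V f ℓ (N - NB - 1) (f x (μ (N - NB) x)) +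
          ENNReal.ofReal (γ ^ (N - NB) / (γ + 1) ^ (N - NB - 2)) *
            ℓ x (μ (N - NB) x))
    (ut : Fin NB → U) (x : X)
    (hδ : (∑ k ∈ Finset.range NB, ℓ (traj f x (extSeq ut) k) (extSeq ut k)) < ⊤)
    (hpos : 0 < Vinf f ℓ x) (hfin : Vinf f ℓ x < ⊤)
    (hpred : Vinf f ℓ (traj f x (extSeq ut) NB) ≤ Vinf f ℓ x) :
    (((∑ k ∈ Finset.range NB, ℓ (traj f x (extSeq ut) k) (extSeq ut k)) +
          Vcl f ℓ (μ (N - NB)) (traj f x (extSeq ut) NB)) -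
        Vinf f ℓ x) / Vinf f ℓ x ≤
      ENNReal.ofReal
          (γ ^ (N - NB) / ((γ + 1) ^ (N - NB - 2) - γ ^ (N - NB))) +
        (∑ k ∈ Finset.range NB, ℓ (traj f x (extSeq ut) k) (extSeq ut k)) /
          Vinf f ℓ x := by
  set M := N - NB
  set δ := ∑ k ∈ Finset.range NB, ℓ (traj f x (extSeq ut) k) (extSeq ut k)
  set y := traj f x (extSeq ut) NB
  set W := Vinf f ℓ x
  have hden : 0 < (γ + 1) ^ (M - 2) := by positivity
  have hdiff : 0 < (γ + 1) ^ (M - 2) - γ ^ M := sub_pos.mpr hstrict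
  set a := γ ^ M / (γ + 1) ^ (M - 2) with ha_def
  set b := γ ^ M / ((γ + 1) ^ (M - 2) - γ ^ M) with hb_def
  have ha0 : 0 ≤ a := by positivity
  have hb0 : 0 ≤ b := by positivity
  have ha1 : a ≤ 1 := (div_le_one hden).mpr hstrict.le
  have hab : (1 + b) * (1 - a) = 1 := by
    rw [ha_def, hb_def]
    field_simp
    ring
  have hcost : ENNReal.ofReal (1 - a) * Vcl f ℓ (μ M) y ≤ W := by
    refine (mul_Vcl_le_of_decrease f ℓ (μ M) (V f ℓ M) _ (fun z => ?_) y).trans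
      ((V_le_Vinf f ℓ M y).trans hpred)
    rw [hDP M hM le_rfl z]
    exact one_sub_mul_add_le ha0 ha1 (hinc z)
  have hcl : Vcl f ℓ (μ M) y ≤ W + ENNReal.ofReal b * W := by
    calc Vcl f ℓ (μ M) y
        = ENNReal.ofReal (1 + b) * (ENNReal.ofReal (1 - a) * Vcl f ℓ (μ M) y) := by
          rw [← mul_assoc, ← ENNReal.ofReal_mul (by linarith), hab]
          simp
      _ ≤ ENNReal.ofReal (1 + b) * W := by gcongr
      _ = W + ENNReal.ofReal b * W := by
          rw [ENNReal.ofReal_add zero_le_one hb0, ENNReal.ofReal_one, add_mul, one_mul]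
  calc (δ + Vcl f ℓ (μ M) y - W) / W
      ≤ (ENNReal.ofReal b * W + δ) / W := by
        gcongr
        rw [tsub_le_iff_right]
        calc δ + Vcl f ℓ (μ M) y ≤ δ + (W + ENNReal.ofReal b * W) := by gcongr
          _ = ENNReal.ofReal b * W + δ + W := by ring
    _ = ENNReal.ofReal b + δ / W := by
        rw [ENNReal.add_div, ENNReal.mul_div_cancel_right hpos.ne' hfin.ne]
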